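/- arXiv:1610.06082 — 4 statements merged into one kernel-verified Lean document; each statement's English description precedes it below -/
import Mathlib

section
/- For linear codes C₂ ⊊ C ⊆ 𝔽_q^n, the relative minimum distance satisfies d(C₂^⊥, C^⊥) = min { #I : I ⊆ [n], dim((C₂^⊥)^I / (C^⊥)^I) = 1 }. -/
open Module

section CodeDefs

variable {F : Type*} [Field F] [Fintype F] [DecidableEq F]

/-- Restriction (puncturing) of a code to the coordinates in `I`. -/
def restrictCode {ι : Type*} (C : Submodule F (ι → F)) (I : Finset ι) :
    Submodule F ({ i // i ∈ I } → F) :=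
  C.map (LinearMap.funLeft F F Subtype.val)

/-- The submodule of vectors supported inside `I`. -/
def zeroOutside {F : Type*} [Field F] {ι : Type*} (I : Finset ι) :
    Submodule F (ι → F) where
  carrier := {c | ∀ j ∉ I, c j = 0}
  add_mem' := by
    intro a b ha hb j hj
    simp [Pi.add_apply, ha j hj, hb j hj]
  zero_mem' := by intro j hj; rfl
  smul_mem' := by
    intro r a ha j hj
    simp [Pi.smul_apply, ha j hj]

/-- Shortening of a code at the coordinates in `I`. -/
def shortenCode {ι : Type*} (C : Submodule F (ι → F)) (I : Finset ι) :
    Submodule F ({ i // i ∈ I } → F) :=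
  (C ⊓ zeroOutside I).map (LinearMap.funLeft F F Subtype.val)

/-- Dual code with respect to the standard bilinear form. -/
def dualCode {ι : Type*} [Fintype ι] (C : Submodule F (ι → F)) :
    Submodule F (ι → F) where
  carrier := {x | ∀ c ∈ C, ∑ i, x i * c i = 0}
  add_mem' := by
    intro a b ha hb c hc
    simp only [Pi.add_apply, add_mul, Finset.sum_add_distrib, ha c hc, hb c hc, add_zero]
  zero_mem' := by intro c hc; simp
  smul_mem' := by
    intro r a ha c hc
    simp only [Pi.smul_apply, smul_eq_mul, mul_assoc, ← Finset.mul_sum, ha c hc, mul_zero]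

/-- Relative minimum distance `d(C₁, C₂) = min { wt c : c ∈ C₁ ∖ C₂ }`. -/
noncomputable def relDist {ι : Type*} [Fintype ι] (C₁ C₂ : Submodule F (ι → F)) : ℕ :=
  sInf {w | ∃ c ∈ C₁, c ∉ C₂ ∧ hammingNorm c = w}

/-- Minimum distance of a code. -/
noncomputable def minDist {ι : Type*} [Fintype ι] (C : Submodule F (ι → F)) : ℕ :=
  sInf {w | ∃ c ∈ C, c ≠ 0 ∧ hammingNorm c = w}

end CodeDefs

theorem finrank_shortenCode {F : Type*} [Field F] [Fintype F] [DecidableEq F] {n : ℕ}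
    (D : Submodule F (Fin n → F)) (I : Finset (Fin n)) :
    finrank F (shortenCode D I) = finrank F (D ⊓ zeroOutside I : Submodule F (Fin n → F)) := by
  unfold shortenCode
  rw [← LinearMap.range_domRestrict]
  apply LinearMap.finrank_range_of_inj
  rintro ⟨x, hx⟩ ⟨y, hy⟩ hxy
  ext j
  by_cases hj : j ∈ I
  · exact congrFun hxy ⟨j, hj⟩
  · exact (hx.2 j hj).trans (hy.2 j hj).symm

theorem exists_of_finrank {F : Type*} [Field F] [Fintype F] [DecidableEq F] {n : ℕ}
    (D₁ D₂ : Submodule F (Fin n → F)) (I : Finset (Fin n))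
    (hI : finrank F (shortenCode D₁ I) = finrank F (shortenCode D₂ I) + 1) :
    ∃ c ∈ D₁, c ∉ D₂ ∧ hammingNorm c ≤ I.card := by
  rw [finrank_shortenCode, finrank_shortenCode] at hI
  have hn : ¬ (D₁ ⊓ zeroOutside I ≤ D₂ ⊓ zeroOutside I) := by
    intro hle
    have := Submodule.finrank_mono hle
    omega
  obtain ⟨c, hc, hc2⟩ := SetLike.not_le_iff_exists.1 hn
  refine ⟨c, hc.1, fun h2 => hc2 ⟨h2, hc.2⟩, ?_⟩
  unfold hammingNorm
  apply Finset.card_le_card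
  intro j hj
  by_contra hjI
  exact (Finset.mem_filter.1 hj).2 (hc.2 j hjI)

theorem finrank_of_minimal {F : Type*} [Field F] [Fintype F] [DecidableEq F] {n : ℕ}
    (D₁ D₂ : Submodule F (Fin n → F)) (hD : D₂ ≤ D₁) (c : Fin n → F) (hc : c ∈ D₁)
    (hc2 : c ∉ D₂) (hmin : ∀ y ∈ D₁, y ∉ D₂ → hammingNorm c ≤ hammingNorm y) :
    ∃ I : Finset (Fin n), I.card = hammingNorm c ∧
      finrank F (shortenCode D₁ I) = finrank F (shortenCode D₂ I) + 1 := by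
  let I : Finset (Fin n) := Finset.univ.filter (fun i => c i ≠ 0)
  refine ⟨I, rfl, ?_⟩
  have memI : ∀ j, j ∈ I ↔ c j ≠ 0 := fun j => by simp [I]
  have hcZ : c ∈ (zeroOutside I : Submodule F (Fin n → F)) := by
    intro j hj
    by_contra h0
    exact hj ((memI j).2 h0)
  have hc0 : c ≠ 0 := fun h0 => hc2 (h0 ▸ D₂.zero_mem)
  obtain ⟨i, hi⟩ := Function.ne_iff.1 hc0
  replace hi : c i ≠ 0 := hi
  rw [finrank_shortenCode, finrank_shortenCode]
  have key : D₁ ⊓ zeroOutside I = (D₂ ⊓ zeroOutside I) ⊔ Submodule.span F {c} := by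
    apply le_antisymm
    · intro x hx
      have hyD : x - (x i / c i) • c ∈ D₁ := D₁.sub_mem hx.1 (D₁.smul_mem _ hc)
      have hyZ : x - (x i / c i) • c ∈ (zeroOutside I : Submodule F (Fin n → F)) :=
        Submodule.sub_mem _ hx.2 (Submodule.smul_mem _ _ hcZ)
      have hy2 : x - (x i / c i) • c ∈ D₂ := by
        by_contra hy
        have h1 := hmin _ hyD hy
        apply absurd h1
        rw [not_le]
        unfold hammingNorm
        apply Finset.card_lt_card
        rw [Finset.ssubset_iff_of_subset]
        · refine ⟨i, by simpa using hi, ?_⟩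
          simp [hi]
        · intro j hj
          by_contra hjI
          exact (Finset.mem_filter.1 hj).2 (hyZ j hjI)
      rw [Submodule.mem_sup]
      exact ⟨_, ⟨hy2, hyZ⟩, (x i / c i) • c,
        Submodule.smul_mem _ _ (Submodule.mem_span_singleton_self c), by simp⟩
    · apply sup_le (inf_le_inf_right _ hD)
      rw [Submodule.span_singleton_le_iff_mem]
      exact ⟨hc, hcZ⟩
  have hdis : (D₂ ⊓ zeroOutside I) ⊓ Submodule.span F {c} = ⊥ := by
    rw [← disjoint_iff, Submodule.disjoint_span_singleton' hc0]
    exact fun hh => hc2 hh.1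
  have hf := Submodule.finrank_sup_add_finrank_inf_eq (D₂ ⊓ zeroOutside I) (Submodule.span F {c})
  rw [hdis, finrank_bot, finrank_span_singleton hc0] at hf
  rw [key]
  exact hf

theorem dualCode_anti {F : Type*} [Field F] [Fintype F] [DecidableEq F] {n : ℕ}
    (C₂ C : Submodule F (Fin n → F)) (h : C₂ ≤ C) : dualCode C ≤ dualCode C₂ :=
  fun _ hx c hc => hx c (h hc)

/-- For linear codes `C₂ ⊊ C ⊆ 𝔽_q^n`,
`d(C₂^⊥, C^⊥) = min { #I : dim((C₂^⊥)^I / (C^⊥)^I) = 1 }`. -/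
theorem relDist_dual_eq_min_card_shorten_dim_one
    {F : Type*} [Field F] [Fintype F] [DecidableEq F] {n : ℕ}
    (C₂ C : Submodule F (Fin n → F)) (h : C₂ < C) :
    relDist (dualCode C₂) (dualCode C)
      = sInf {k | ∃ I : Finset (Fin n), I.card = k ∧
          finrank F (shortenCode (dualCode C₂) I)
            = finrank F (shortenCode (dualCode C) I) + 1} := by
  have hD := dualCode_anti C₂ C h.le
  generalize dualCode C₂ = D₁ at *
  generalize dualCode C = D₂ at *
  unfold relDist
  rcases Set.eq_empty_or_nonempty {w | ∃ c ∈ D₁, c ∉ D₂ ∧ hammingNorm c = w} with hA | hA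
  · rw [hA]
    symm
    rw [Nat.sInf_empty, Nat.sInf_eq_zero]
    right
    rw [Set.eq_empty_iff_forall_notMem]
    rintro k ⟨I, -, hI⟩
    obtain ⟨c, h1, h2, -⟩ := exists_of_finrank D₁ D₂ I hI
    exact (Set.eq_empty_iff_forall_notMem.1 hA) _ ⟨c, h1, h2, rfl⟩
  · obtain ⟨c, h1, h2, h3⟩ := Nat.sInf_mem hA
    have hB := finrank_of_minimal D₁ D₂ hD c h1 h2
      (fun y hy hy2 => h3 ▸ Nat.sInf_le ⟨y, hy, hy2, rfl⟩)
    rw [← h3]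
    apply le_antisymm
    · refine le_csInf ⟨_, hB⟩ ?_
      rintro k ⟨I, rfl, hI⟩
      obtain ⟨y, hy, hy2, hle⟩ := exists_of_finrank D₁ D₂ I hI
      exact le_trans (h3 ▸ Nat.sInf_le ⟨y, hy, hy2, rfl⟩) hle
    · exact Nat.sInf_le hB
end

section
/- Let C₂ ⊊ C ⊆ 𝔽_q^n be linear codes and I ⊆ [n] with #I < d(C₂^⊥, C^⊥). Then the restricted codes coincide: C₂_I = C_I. -/
open Module

/-- If `#I < d(C₂^⊥, C^⊥)` then the restricted codes coincide:
`C₂_I = C_I`. -/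
theorem restrict_eq_of_card_lt_relDist_dual
    {F : Type*} [Field F] [Fintype F] [DecidableEq F] {n : ℕ}
    (C₂ C : Submodule F (Fin n → F)) (h : C₂ < C) (I : Finset (Fin n))
    (hI : I.card < relDist (dualCode C₂) (dualCode C)) :
    restrictCode C₂ I = restrictCode C I := by
  apply le_antisymm
  · exact Submodule.map_mono h.le
  · rintro v ⟨x, hx, rfl⟩
    by_contra hv
    obtain ⟨f, hf, hle⟩ := Submodule.exists_le_ker_of_notMem hv
    let y : Fin n → F := fun i =>
      if hi : i ∈ I then f (Pi.single (⟨i, hi⟩ : { i // i ∈ I }) 1) else 0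
    have key : ∀ c : Fin n → F,
        ∑ i, y i * c i = f (LinearMap.funLeft F F Subtype.val c) := by
      intro c
      rw [LinearMap.pi_apply_eq_sum_univ f]
      have h1 : ∑ i, y i * c i = ∑ i ∈ I, y i * c i := by
        symm
        apply Finset.sum_subset (Finset.subset_univ I)
        intro i _ hi
        simp [y, hi]
      rw [h1, ← Finset.sum_coe_sort I]
      apply Finset.sum_congr rfl
      intro i _
      have h2 : (Pi.single i 1 : { i // i ∈ I } → F) = fun j => if i = j then 1 else 0 := by
        ext j
        simp [Pi.single_apply, eq_comm]
      simp [y, h2, LinearMap.funLeft_apply, mul_comm]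
    have hy2 : y ∈ dualCode C₂ := by
      intro c hc
      rw [key]
      exact hle ⟨c, hc, rfl⟩
    have hy : y ∉ dualCode C := fun hy => hf (by rw [← key]; exact hy x hx)
    have hd : relDist (dualCode C₂) (dualCode C) ≤ hammingNorm y :=
      Nat.sInf_le ⟨y, hy2, hy, rfl⟩
    have hw : hammingNorm y ≤ I.card := by
      apply Finset.card_le_card
      intro i hi
      by_contra hn
      simp [y, hn] at hi
    omega
end

section
/- Let C₂ ⊊ C₁ ⊆ 𝔽_q^n be linear codes with dim(C₁) = k₁ and dim(C₂) = k₂, and let I ⊆ [n] with #I ≥ n − d(C₁, C₂) + 1. Then the projection map from C₁/C₂ to C₁_I/C₂_I induced by restriction to I is injective; in particular dim(C₁_I / C₂_I) = k₁ − k₂. -/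
open Module

/-- If `#I ≥ n − d(C₁,C₂) + 1`, then restriction to `I` is injective
on cosets of `C₂` in `C₁`; in particular `dim(C₁_I/C₂_I) = k₁ − k₂`. -/
theorem reconstruction_of_card_ge
    {F : Type*} [Field F] [Fintype F] [DecidableEq F] {n : ℕ}
    (C₂ C₁ : Submodule F (Fin n → F)) (h : C₂ < C₁) (I : Finset (Fin n))
    (hI : n - relDist C₁ C₂ + 1 ≤ I.card) :
    (∀ c ∈ C₁,
        (LinearMap.funLeft F F (Subtype.val : { i // i ∈ I } → Fin n)) c
          ∈ restrictCode C₂ I → c ∈ C₂)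
    ∧ finrank F (restrictCode C₁ I) - finrank F (restrictCode C₂ I)
        = finrank F C₁ - finrank F C₂ := by
  have key : ∀ x ∈ C₁, LinearMap.funLeft F F (Subtype.val : { i // i ∈ I } → Fin n) x = 0 →
      x ∈ C₂ := by
    intro x hx h0
    by_contra hx2
    have hd : relDist C₁ C₂ ≤ hammingNorm x := Nat.sInf_le ⟨x, hx, hx2, rfl⟩
    have hsub : (Finset.univ.filter fun i => x i ≠ 0) ⊆ Iᶜ := by
      intro i hi
      simp only [Finset.mem_filter, Finset.mem_univ, true_and] at hi
      rw [Finset.mem_compl]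
      intro hiI
      exact hi (congrFun h0 ⟨i, hiI⟩)
    have hw : hammingNorm x ≤ (Iᶜ).card := Finset.card_le_card hsub
    have hc := Finset.card_add_card_compl I
    rw [Fintype.card_fin] at hc
    omega
  refine ⟨?_, ?_⟩
  · rintro c hc ⟨y, hy, hyc⟩
    have h1 : c - y ∈ C₂ := by
      apply key _ (C₁.sub_mem hc (h.le hy))
      rw [map_sub, hyc, sub_self]
    simpa using C₂.add_mem h1 hy
  · have rn : ∀ C : Submodule F (Fin n → F),
        finrank F (restrictCode C I) + finrank F
          (C ⊓ LinearMap.ker (LinearMap.funLeft F F (Subtype.val : { i // i ∈ I } → Fin n)) :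
            Submodule F (Fin n → F)) = finrank F C := by
      intro C
      have e := ((LinearMap.funLeft F F
        (Subtype.val : { i // i ∈ I } → Fin n)).domRestrict C).finrank_range_add_finrank_ker
      rw [LinearMap.range_domRestrict, LinearMap.ker_domRestrict] at e
      rw [← e, restrictCode, ← Submodule.map_comap_subtype]
      congr 1
      exact Submodule.finrank_map_subtype_eq _ _
    have hk : C₁ ⊓ LinearMap.ker (LinearMap.funLeft F F (Subtype.val : { i // i ∈ I } → Fin n))
        = C₂ ⊓ LinearMap.ker (LinearMap.funLeft F F (Subtype.val : { i // i ∈ I } → Fin n)) :=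
      le_antisymm (fun x hx => ⟨key x hx.1 hx.2, hx.2⟩) (fun x hx => ⟨h.le hx.1, hx.2⟩)
    have e1 := rn C₁
    have e2 := rn C₂
    rw [hk] at e1
    omega
end

section
/- Let C₂ ⊊ C₁ ⊆ 𝔽_q^n be linear codes and let I ⊆ [n] with #I ≤ d(C₂^⊥, C₁^⊥) − 1. Then dim(C₁_I) = dim(C₂_I), i.e., C₁_I = C₂_I; hence restriction to I gives no information distinguishing cosets of C₂ in C₁. -/
open Module

/-- If `#I ≤ d(C₂^⊥, C₁^⊥) − 1` then `C₁_I = C₂_I`: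
restriction to `I` gives no information distinguishing cosets of `C₂` in `C₁`. -/
theorem privacy_restrict_eq
    {F : Type*} [Field F] [Fintype F] [DecidableEq F] {n : ℕ}
    (C₂ C₁ : Submodule F (Fin n → F)) (h : C₂ < C₁) (I : Finset (Fin n))
    (hI : I.card ≤ relDist (dualCode C₂) (dualCode C₁) - 1) :
    finrank F (restrictCode C₁ I) = finrank F (restrictCode C₂ I)
    ∧ restrictCode C₁ I = restrictCode C₂ I := by
  have key : restrictCode C₁ I ≤ restrictCode C₂ I := by
    intro v hv
    by_contra hv2
    obtain ⟨f, hf, hle⟩ := Submodule.exists_le_ker_of_notMem hv2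
    let c : Fin n → F := fun i => if hi : i ∈ I then f (Pi.single ⟨i, hi⟩ 1) else 0
    have hc : ∀ x : Fin n → F, ∑ i, c i * x i = f (LinearMap.funLeft F F Subtype.val x) := by
      intro x
      rw [LinearMap.pi_apply_eq_sum_univ f]
      have h1 : ∑ i, c i * x i = ∑ i ∈ I, c i * x i := by
        symm
        apply Finset.sum_subset (Finset.subset_univ _)
        intro i _ hi
        simp [c, hi]
      rw [h1, ← Finset.sum_coe_sort I]
      apply Finset.sum_congr rfl
      rintro ⟨i, hi⟩ _
      have h2 : (fun j : {i // i ∈ I} => if (⟨i, hi⟩ : {i // i ∈ I}) = j then (1 : F) else 0)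
          = Pi.single ⟨i, hi⟩ 1 := by
        ext j
        simp [Pi.single_apply, eq_comm]
      rw [h2]
      simp [c, hi, LinearMap.funLeft_apply, mul_comm]
    have hc2 : c ∈ dualCode C₂ := by
      intro x hx
      rw [hc]
      exact hle (Submodule.mem_map_of_mem hx)
    have hc1 : c ∉ dualCode C₁ := by
      intro hmem
      obtain ⟨x, hx, rfl⟩ := hv
      exact hf ((hc x).symm.trans (hmem x hx))
    have hd : relDist (dualCode C₂) (dualCode C₁) ≤ hammingNorm c :=
      Nat.sInf_le ⟨c, hc2, hc1, rfl⟩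
    have hw : hammingNorm c ≤ I.card := by
      apply Finset.card_le_card
      intro i hi
      by_contra hiI
      simp [c, hiI] at hi
    have h0 : hammingNorm c = 0 := by omega
    rw [hammingNorm_eq_zero] at h0
    exact hc1 (h0 ▸ (dualCode C₁).zero_mem)
  have heq : restrictCode C₁ I = restrictCode C₂ I :=
    le_antisymm key (Submodule.map_mono h.le)
  exact ⟨by rw [heq], heq⟩
end
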